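/- For every natural number n ≥ 5 and every λ ∈ ℂ there exist a nonzero complex Hilbert space H and bounded linear operators Q₁, …, Qₙ on H with Qₖ² = Qₖ for all k and Q₁ + ⋯ + Qₙ = λ·I. -/

import Mathlib

/-!
If `∑ i, u i * v i = 1` and `v i * x * u i = 1` for every `i`, then the elements `x * u i * v i`
are idempotents with sum `x`: a matrix whose diagonal entries are all `1` in some basis is the sum
of the rank-one idempotents given by its columns. For `n × n` matrices this applies to
`t + n (1 - t) e₁₁`, which has trace `n` and equal diagonal entries in a suitable basis.

A Hilbert space `H` of infinite dimension is isomorphic to `H ⊕ H`, hence also to `H ⊕ (H ⊕ H)`,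
with the same projection `p` onto the first summand in both decompositions. So `s + 2 (1 - s) p` is
a sum of two idempotents and `t + 3 (1 - t) p` is a sum of three. For `t = 5 - 2 λ` and
`s = 3 λ - 5` the multiples of `p` cancel, and the five idempotents have sum `s + t = λ`.
-/

open scoped lp InnerProductSpace

/-- `IsSumOfIdempotents n x` says that `x` is a sum of `n` idempotents, which may be zero and may
coincide. -/
def IsSumOfIdempotents {R : Type*} [NonUnitalNonAssocSemiring R] (n : ℕ) (x : R) : Prop :=
  ∃ q : Fin n → R, (∀ k, IsIdempotentElem (q k)) ∧ ∑ k, q k = x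

namespace IsSumOfIdempotents

section NonUnitalNonAssocSemiring

variable {R : Type*} [NonUnitalNonAssocSemiring R] {m n : ℕ} {x y : R}

theorem of_fintype {ι : Type*} [Fintype ι] (q : ι → R) (hq : ∀ i, IsIdempotentElem (q i)) :
    IsSumOfIdempotents (Fintype.card ι) (∑ i, q i) :=
  ⟨q ∘ (Fintype.equivFin ι).symm, fun _ => hq _, (Fintype.equivFin ι).symm.sum_comp q⟩

protected theorem zero (n : ℕ) : IsSumOfIdempotents n (0 : R) :=
  ⟨0, fun _ => .zero, Finset.sum_const_zero⟩

protected theorem add (hx : IsSumOfIdempotents m x) (hy : IsSumOfIdempotents n y) :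
    IsSumOfIdempotents (m + n) (x + y) := by
  obtain ⟨p, hp, rfl⟩ := hx
  obtain ⟨q, hq, rfl⟩ := hy
  refine ⟨Fin.append p q, fun k => ?_, by simp [Fin.sum_univ_add]⟩
  induction k using Fin.addCases <;> simp [hp, hq]

protected theorem mono (hx : IsSumOfIdempotents m x) (hmn : m ≤ n) : IsSumOfIdempotents n x := by
  obtain ⟨k, rfl⟩ := Nat.exists_eq_add_of_le hmn
  simpa using hx.add (.zero k)

end NonUnitalNonAssocSemiring

theorem of_sum_mul_eq_one {R ι : Type*} [Semiring R] [Fintype ι] {u v : ι → R} {x : R}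
    (huv : ∑ i, u i * v i = 1) (hx : ∀ i, v i * x * u i = 1) :
    IsSumOfIdempotents (Fintype.card ι) x := by
  have hsum : ∑ i, x * u i * v i = x := by
    simp only [mul_assoc, ← Finset.mul_sum, huv, mul_one]
  rw [← hsum]
  refine of_fintype _ fun i => ?_
  calc x * u i * v i * (x * u i * v i) = x * u i * (v i * x * u i) * v i := by
        simp only [mul_assoc]
    _ = x * u i * v i := by rw [hx, mul_one]

end IsSumOfIdempotents

/-- The relations of the Leavitt algebra `L(1, n)`, where `n` is the cardinality of `ι`: the row `a`
and the column `b` are inverse to each other as matrices. When `b i` is the adjoint of `a i` these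
are the relations of the Cuntz algebra `O_n`. -/
structure IsLeavittFamily {R ι : Type*} [Semiring R] [Fintype ι] (a b : ι → R) : Prop where
  mul_self (i : ι) : b i * a i = 1
  mul_of_ne {i j : ι} (hij : i ≠ j) : b i * a j = 0
  sum_mul : ∑ i, a i * b i = 1

namespace IsLeavittFamily

theorem mul_eq_ite {R ι : Type*} [Semiring R] [Fintype ι] [DecidableEq ι] {a b : ι → R}
    (h : IsLeavittFamily a b) (i j : ι) : b i * a j = if i = j then 1 else 0 := by
  split_ifs with hij
  · rw [hij, h.mul_self]
  · exact h.mul_of_ne hij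

theorem refine_some {R ι κ : Type*} [Semiring R] [Fintype ι] [Fintype κ] {a b : Option ι → R}
    {c d : κ → R} (hab : IsLeavittFamily a b) (hcd : IsLeavittFamily c d) :
    IsLeavittFamily (fun o : Option (ι × κ) => o.elim (a none) fun p => a (some p.1) * c p.2)
      (fun o => o.elim (b none) fun p => d p.2 * b (some p.1)) where
  mul_self
    | none => hab.mul_self none
    | some (i, k) => by
      simp only [Option.elim]
      rw [mul_assoc, ← mul_assoc (b _), hab.mul_self, one_mul, hcd.mul_self]
  mul_of_ne {o o'} ho := by
    rcases o with _ | ⟨i, k⟩ <;> rcases o' with _ | ⟨j, l⟩ <;> simp only [Option.elim]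
    · exact absurd rfl ho
    · rw [← mul_assoc, hab.mul_of_ne (Option.some_ne_none j).symm, zero_mul]
    · rw [mul_assoc, hab.mul_of_ne (Option.some_ne_none i), mul_zero]
    · rw [mul_assoc, ← mul_assoc (b _)]
      obtain rfl | hij := eq_or_ne i j
      · rw [hab.mul_self, one_mul, hcd.mul_of_ne fun hkl => ho (by rw [hkl])]
      · rw [hab.mul_of_ne ((Option.some_injective ι).ne hij), zero_mul, mul_zero]
  sum_mul := by
    have hinner (i : ι) :
        ∑ k, a (some i) * c k * (d k * b (some i)) = a (some i) * b (some i) := by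
      calc ∑ k, a (some i) * c k * (d k * b (some i))
          = a (some i) * (∑ k, c k * d k) * b (some i) := by
            simp only [Finset.mul_sum, Finset.sum_mul, mul_assoc]
        _ = a (some i) * b (some i) := by rw [hcd.sum_mul, mul_one]
    simp only [Fintype.sum_option, Fintype.sum_prod_type, Option.elim, hinner]
    rw [← hab.sum_mul, Fintype.sum_option]

section Algebra

variable {K R ι : Type*} [CommRing K] [Ring R] [Algebra K R] [Fintype ι] {a b : Option ι → R}

/-- The `u i` are the vectors `e₀ + eᵢ` and `e₀ - ∑ eⱼ`, and the `v i` are the dual basis. -/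
theorem exists_basis_constant_corner (h : IsLeavittFamily a b) {ν : K}
    (hν : ν * (Fintype.card ι + 1) = 1) :
    ∃ u v : Option ι → R, ∑ i, u i * v i = 1 ∧ (∀ i, v i * u i = 1) ∧
      (∀ i, v i * a none = ν • 1) ∧ ∀ i, b none * u i = 1 := by
  classical
  let v₀ : R := ν • (b none - ∑ j, b (some j))
  have hv₀_none : v₀ * a none = ν • 1 := by
    simp [v₀, sub_mul, Finset.sum_mul, h.mul_eq_ite]
  have hv₀_some (i : ι) : v₀ * a (some i) = -(ν • 1) := by
    simp [v₀, sub_mul, Finset.sum_mul, h.mul_eq_ite]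
  refine ⟨fun o => o.elim (a none - ∑ j, a (some j)) fun i => a none + a (some i),
    fun o => o.elim v₀ fun i => v₀ + b (some i), ?_, ?_, ?_, ?_⟩
  · have hv₀ : (Fintype.card ι + 1 : K) • (a none * v₀) =
        a none * b none - a none * ∑ j, b (some j) := by
      rw [mul_smul_comm, smul_smul, mul_comm, hν, one_smul, mul_sub]
    rw [Fintype.sum_option]
    calc (a none - ∑ j, a (some j)) * v₀ + ∑ i, (a none + a (some i)) * (v₀ + b (some i))
        = (Fintype.card ι + 1 : K) • (a none * v₀) + a none * ∑ j, b (some j) +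
            ∑ i, a (some i) * b (some i) := by
          simp only [sub_mul, add_mul, mul_add, Finset.sum_add_distrib, Finset.sum_mul,
            Finset.mul_sum, Finset.sum_const, Finset.card_univ, add_smul, one_smul,
            ← Nat.cast_smul_eq_nsmul K]
          abel
      _ = a none * b none + ∑ i, a (some i) * b (some i) := by rw [hv₀, sub_add_cancel]
      _ = 1 := by rw [← h.sum_mul, Fintype.sum_option]
  · rintro (_ | i)
    · calc v₀ * (a none - ∑ j, a (some j))
          = (ν * (Fintype.card ι + 1)) • (1 : R) := by
            rw [mul_sub, Finset.mul_sum]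
            simp only [hv₀_none, hv₀_some, Finset.sum_const, Finset.card_univ,
              ← Nat.cast_smul_eq_nsmul K]
            module
        _ = 1 := by rw [hν, one_smul]
    · simp [add_mul, mul_add, hv₀_none, hv₀_some, h.mul_eq_ite]
  · rintro (_ | i) <;> simp [add_mul, hv₀_none, h.mul_eq_ite]
  · rintro (_ | i) <;> simp [mul_add, mul_sub, Finset.mul_sum, h.mul_eq_ite]

theorem isSumOfIdempotents_smul_one_add (h : IsLeavittFamily a b)
    (hcard : IsUnit (Fintype.card ι + 1 : K)) (t : K) :
    IsSumOfIdempotents (Fintype.card ι + 1)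
      (t • (1 : R) + ((Fintype.card ι + 1) * (1 - t)) • (a none * b none)) := by
  obtain ⟨ν, hν⟩ := hcard.exists_left_inv
  obtain ⟨u, v, huv, hvu, hva, hbu⟩ := h.exists_basis_constant_corner hν
  rw [← Fintype.card_option]
  refine .of_sum_mul_eq_one huv fun i => ?_
  calc v i * (t • (1 : R) + ((Fintype.card ι + 1) * (1 - t)) • (a none * b none)) * u i
      = t • (v i * u i) +
          ((Fintype.card ι + 1) * (1 - t)) • (v i * a none * (b none * u i)) := by
        simp only [mul_add, add_mul, mul_smul_comm, smul_mul_assoc, mul_one, mul_assoc]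
    _ = (t + ν * (Fintype.card ι + 1) * (1 - t)) • (1 : R) := by
        rw [hvu, hva, hbu, mul_one, smul_smul, ← add_smul, mul_right_comm, mul_comm ν]
    _ = 1 := by rw [hν, one_mul, add_sub_cancel, one_smul]

theorem isSumOfIdempotents_five_smul_one {a b : Option Unit → R} (h : IsLeavittFamily a b)
    (h2 : IsUnit (2 : K)) (h3 : IsUnit (3 : K)) (lam : K) :
    IsSumOfIdempotents 5 (lam • (1 : R)) := by
  let p : R := a none * b none
  have two : IsSumOfIdempotents 2 ((3 * lam - 5) • (1 : R) + (2 * (1 - (3 * lam - 5))) • p) := by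
    simpa [one_add_one_eq_two] using
      h.isSumOfIdempotents_smul_one_add (by simpa [one_add_one_eq_two] using h2) (3 * lam - 5)
  have three : IsSumOfIdempotents 3 ((5 - 2 * lam) • (1 : R) + (3 * (1 - (5 - 2 * lam))) • p) := by
    simpa [two_add_one_eq_three] using
      (h.refine_some h).isSumOfIdempotents_smul_one_add
        (by simpa [two_add_one_eq_three] using h3) (5 - 2 * lam)
  convert two.add three using 1
  module

end Algebra

end IsLeavittFamily

section HilbertSpace

variable {𝕜 E F X Y : Type*} [RCLike 𝕜] [NormedAddCommGroup E] [InnerProductSpace 𝕜 E]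
  [NormedAddCommGroup F] [InnerProductSpace 𝕜 F]

theorem not_finiteDimensional_of_hilbertBasis [Infinite X] (B : HilbertBasis X 𝕜 E) :
    ¬ FiniteDimensional 𝕜 E := fun _ =>
  have := B.orthonormal.linearIndependent.finite
  not_finite X

theorem ext_hilbertBasis {M : Type*} [AddCommMonoid M] [Module 𝕜 M] [TopologicalSpace M]
    [T2Space M] (B : HilbertBasis X 𝕜 E) {S T : E →L[𝕜] M} (h : ∀ x, S (B x) = T (B x)) : S = T :=
  ContinuousLinearMap.ext_on (Submodule.dense_iff_topologicalClosure_eq_top.2 B.dense_span)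
    (Set.forall_mem_range.2 h)

variable [CompleteSpace E]

theorem exists_infinite_hilbertBasis (hE : ¬ FiniteDimensional 𝕜 E) :
    ∃ (X : Set E) (_ : HilbertBasis X 𝕜 E), Infinite X := by
  obtain ⟨X, B, -⟩ := exists_hilbertBasis 𝕜 E
  refine ⟨X, B, not_finite_iff_infinite.1 fun hX => hE ?_⟩
  have := Fintype.ofFinite X
  exact .of_basis B.toOrthonormalBasis.toBasis

theorem exists_clm_map_hilbertBasis_of_injective [CompleteSpace F] (B : HilbertBasis X 𝕜 E)
    (C : HilbertBasis Y 𝕜 F) {f : X → Y} (hf : f.Injective) :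
    ∃ S : E →L[𝕜] F, (∀ x, S (B x) = C (f x)) ∧ (∀ x, S.adjoint (C (f x)) = B x) ∧
      ∀ y ∉ Set.range f, S.adjoint (C y) = 0 := by
  classical
  have hC : Orthonormal 𝕜 (C ∘ f) := C.orthonormal.comp f hf
  let S : E →L[𝕜] F :=
    (hC.orthogonalFamily.linearIsometry.comp B.repr.toLinearIsometry).toContinuousLinearMap
  have hS (x : X) : S (B x) = C (f x) := by
    simp [S, B.repr_self, hC.orthogonalFamily.linearIsometry_apply_single]
  have hS_adjoint (x : X) (y : Y) :
      ⟪B x, S.adjoint (C y)⟫_𝕜 = if f x = y then 1 else 0 := by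
    rw [ContinuousLinearMap.adjoint_inner_right, hS, orthonormal_iff_ite.1 C.orthonormal]
  refine ⟨S, hS, fun x => B.repr.injective (lp.ext (funext fun x' => ?_)), fun y hy =>
    B.repr.injective (lp.ext (funext fun x' => ?_))⟩
  · rw [B.repr_apply_apply, B.repr_apply_apply, hS_adjoint, orthonormal_iff_ite.1 B.orthonormal]
    simp only [hf.eq_iff]
  · rw [B.repr_apply_apply, hS_adjoint, if_neg fun h => hy ⟨x', h⟩, map_zero]
    rfl

theorem exists_isLeavittFamily_adjoint {ι : Type*} [Fintype ι] (B : HilbertBasis X 𝕜 E)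
    (e : ι × X ≃ X) :
    ∃ S : ι → E →L[𝕜] E, IsLeavittFamily S fun i => (S i).adjoint := by
  have he (i : ι) : (fun x => e (i, x)).Injective := e.injective.comp (Prod.mk_right_injective i)
  choose S hS hS_adjoint hS_adjoint_zero using fun i =>
    exists_clm_map_hilbertBasis_of_injective B B (he i)
  have hS_adjoint_ne {i j : ι} (hij : i ≠ j) (x : X) : (S i).adjoint (B (e (j, x))) = 0 :=
    hS_adjoint_zero i _ fun ⟨x', hx'⟩ => hij (congrArg Prod.fst (e.injective hx'))
  refine ⟨S, fun i => ext_hilbertBasis B fun x => ?_, fun {i j} hij =>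
    ext_hilbertBasis B fun x => ?_, ext_hilbertBasis B fun y => ?_⟩
  · simp [hS, hS_adjoint]
  · simp [hS, hS_adjoint_ne hij]
  · obtain ⟨⟨j, x⟩, rfl⟩ := e.surjective y
    rw [sum_apply, Finset.sum_eq_single j]
    · simp [hS, hS_adjoint]
    · intro i _ hij
      simp [hS_adjoint_ne hij]
    · exact fun hj => absurd (Finset.mem_univ j) hj

end HilbertSpace

theorem n_bounded_idempotents_any_lambda_general {𝕜 H : Type*} [RCLike 𝕜]
    [NormedAddCommGroup H] [InnerProductSpace 𝕜 H] [CompleteSpace H]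
    (hH : ¬ FiniteDimensional 𝕜 H) {n : ℕ} (hn : 5 ≤ n) (lam : 𝕜) :
    ∃ Q : Fin n → H →L[𝕜] H, (∀ k, Q k ^ 2 = Q k) ∧ ∑ k, Q k = lam • (1 : H →L[𝕜] H) := by
  obtain ⟨X, B, _⟩ := exists_infinite_hilbertBasis hH
  obtain ⟨e⟩ : Nonempty (Option Unit × X ≃ X) := by simp [← Cardinal.eq, two_mul]
  obtain ⟨S, hS⟩ := exists_isLeavittFamily_adjoint B e
  obtain ⟨Q, hQ, hsum⟩ :=
    (hS.isSumOfIdempotents_five_smul_one two_ne_zero.isUnit three_ne_zero.isUnit lam).mono hn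
  exact ⟨Q, fun k => (sq (Q k)).trans (hQ k), hsum⟩

/-- For every `n ≥ 5` and every `λ ∈ ℂ` there exist `n` bounded idempotent operators
on a nonzero complex Hilbert space summing to `λ·I`. -/
theorem n_bounded_idempotents_any_lambda (n : ℕ) (hn : 5 ≤ n) (lam : ℂ) :
    ∃ (H : Type) (_ : NormedAddCommGroup H) (_ : InnerProductSpace ℂ H)
      (_ : CompleteSpace H) (_ : Nontrivial H) (Q : Fin n → H →L[ℂ] H),
      (∀ k, Q k ^ 2 = Q k) ∧ ∑ k, Q k = lam • (1 : H →L[ℂ] H) :=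
  have hH := not_finiteDimensional_of_hilbertBasis (HilbertBasis.ofRepr (.refl ℂ ℓ²(ℕ, ℂ)))
  ⟨ℓ²(ℕ, ℂ), _, _, inferInstance, not_subsingleton_iff_nontrivial.1 fun _ => hH inferInstance,
    n_bounded_idempotents_any_lambda_general hH hn lam⟩
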